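/- Let p ≥ 1 be a real number. Let k̃ : ℝ × [0,∞) → ℝ be a smooth function, 2π-periodic in its first (angular) variable θ, with k̃(θ,τ) > 0 everywhere, satisfying the rescaled curve-shortening equation ∂k̃/∂τ = p·k̃^{1+1/p}·∂²k̃/∂θ² + p·k̃^{2+1/p} − p·k̃ on ℝ × (0,∞), and suppose sup_θ |k̃(θ,τ) − 1| → 0 as τ → ∞. Then for any constant α with 0 < α < 1 there exists a constant C₃ > 0, depending only on p, α and the initial data k̃(·,0), such that for all τ ≥ 0: (∫₀^{2π} (∂k̃/∂θ)² dθ)^{1/2} ≤ C₃·exp(−2αp·τ). -/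

import Mathlib

open Real Filter Set

/-!
The idea is that the modes `±1` of `k^(-1/p)`, which are the only obstruction to decay at linear
order, vanish identically. Indeed the flow gives `∂k^(-1/p)/∂τ = k^(-1/p) - (k'' + k)`, and the
operator `k'' + k` annihilates the modes `±1`, so each of these two Fourier coefficients solves
`M' = M`; being bounded as `k → 1`, it is zero.

Up to the factor `-1/p` and an error that is small relative to `k'`, the derivative of `k^(-1/p)`
is `k'`. So `k'` has almost no mass in the modes `|n| ≤ 1` and Wirtinger's inequality improves to
`∫ k''² ≥ (4 - o(1)) ∫ k'²`. The energy `E = ∫ k'²` satisfies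
`E' = -2 ∫ k'' ∂k/∂τ = -2 p ∫ k^(1+1/p) k''² + 2 ∫ ((2 p + 1) k^(1+1/p) - p) k'²`, which is then at
most `-(2 (4 p - (p + 1)) - o(1)) E`, and Grönwall's inequality gives `√E = O(exp (-β τ))` for every
`β < 3 p - 1`; finally `2 α p < 3 p - 1` for `α < 1 ≤ p`.
-/

section FourierCoefficients

open MeasureTheory

lemma memLp_restrict_Ioc_of_continuousOn_Icc {E : Type*} [NormedAddCommGroup E] {f : ℝ → E}
    {a b : ℝ} (hf : ContinuousOn f (Icc a b)) (q : ENNReal) :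
    MemLp f q (volume.restrict (Ioc a b)) := by
  obtain ⟨C, hC⟩ := isCompact_Icc.exists_bound_of_continuousOn hf
  refine .of_bound ((hf.mono Ioc_subset_Icc_self).aestronglyMeasurable measurableSet_Ioc) C ?_
  exact (ae_restrict_iff' measurableSet_Ioc).2 <| .of_forall fun x hx =>
    hC x (Ioc_subset_Icc_self hx)

variable {a b : ℝ} (hab : a < b)

lemma continuous_fourier_coe (T : ℝ) (n : ℤ) :
    Continuous fun x : ℝ => fourier n (x : AddCircle T) :=
  (map_continuous (fourier n)).comp (AddCircle.continuous_mk' T)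

lemma fourierCoeffOn_sub {E : Type*} [NormedAddCommGroup E] [NormedSpace ℂ E] {f g : ℝ → E}
    (hf : IntervalIntegrable f volume a b) (hg : IntervalIntegrable g volume a b) (n : ℤ) :
    fourierCoeffOn hab (fun x => f x - g x) n
      = fourierCoeffOn hab f n - fourierCoeffOn hab g n := by
  have hφ := (continuous_fourier_coe (b - a) (-n)).continuousOn (s := uIcc a b)
  simp only [fourierCoeffOn_eq_integral, smul_sub]
  rw [intervalIntegral.integral_sub (hf.continuousOn_smul hφ) (hg.continuousOn_smul hφ), smul_sub]

lemma fourierCoeffOn_deriv_of_periodic {f f' : ℝ → ℂ}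
    (hf : ∀ x ∈ uIcc a b, HasDerivAt f (f' x) x) (hf' : IntervalIntegrable f' volume a b)
    (hper : f b = f a) (n : ℤ) :
    fourierCoeffOn hab f' n = 2 * π * n / (b - a) * Complex.I * fourierCoeffOn hab f n := by
  rcases eq_or_ne n 0 with rfl | hn
  · simp [fourierCoeffOn_eq_integral, intervalIntegral.integral_eq_sub_of_hasDerivAt hf hf', hper]
  · have hba : (b : ℂ) - a ≠ 0 := by exact_mod_cast (sub_pos.2 hab).ne'
    have hn' : (n : ℂ) ≠ 0 := by exact_mod_cast hn
    have hπ : (π : ℂ) ≠ 0 := by exact_mod_cast pi_ne_zero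
    rw [fourierCoeffOn_of_hasDerivAt hab hn hf hf', hper]
    field_simp
    ring

lemma fourierCoeffOn_deriv_deriv_of_periodic {f f' f'' : ℝ → ℂ}
    (hf : ∀ x ∈ uIcc a b, HasDerivAt f (f' x) x) (hf' : ∀ x ∈ uIcc a b, HasDerivAt f' (f'' x) x)
    (hf'' : IntervalIntegrable f'' volume a b) (hper : f b = f a) (hper' : f' b = f' a) (n : ℤ) :
    fourierCoeffOn hab f'' n = -(2 * π * n / (b - a)) ^ 2 * fourierCoeffOn hab f n := by
  have hf'_int : IntervalIntegrable f' volume a b :=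
    ContinuousOn.intervalIntegrable fun x hx => (hf' x hx).continuousAt.continuousWithinAt
  rw [fourierCoeffOn_deriv_of_periodic hab hf' hf'' hper',
    fourierCoeffOn_deriv_of_periodic hab hf hf'_int hper]
  linear_combination (2 * π * n / (b - a)) ^ 2 * fourierCoeffOn hab f n * Complex.I_sq

lemma norm_sq_fourierCoeffOn_deriv_of_periodic {f f' : ℝ → ℂ}
    (hf : ∀ x ∈ uIcc a b, HasDerivAt f (f' x) x) (hf' : IntervalIntegrable f' volume a b)
    (hper : f b = f a) (n : ℤ) :
    ‖fourierCoeffOn hab f' n‖ ^ 2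
      = (2 * π / (b - a)) ^ 2 * (n ^ 2 * ‖fourierCoeffOn hab f n‖ ^ 2) := by
  have hba : ‖(b : ℂ) - a‖ ^ 2 = (b - a) ^ 2 := by
    rw [← Complex.ofReal_sub, Complex.norm_real, norm_eq_abs, sq_abs]
  rw [fourierCoeffOn_deriv_of_periodic hab hf hf' hper]
  simp only [norm_mul, norm_div, mul_pow, div_pow, hba, Complex.norm_I, Complex.norm_intCast,
    Complex.norm_real, norm_eq_abs, sq_abs, Complex.norm_ofNat]
  ring

/- After Parseval this is the termwise inequality `N² ≤ n²` for `|n| ≥ N`, the modes below `N` being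
compensated exactly. -/
lemma wirtinger_sub_low_modes {f f' : ℝ → ℂ} (hf : ∀ x ∈ uIcc a b, HasDerivAt f (f' x) x)
    (hf' : MemLp f' 2 (volume.restrict (Ioc a b))) (hper : f b = f a) (N : ℕ) :
    (2 * π / (b - a)) ^ 2 * (N ^ 2 * (∫ x in a..b, ‖f x‖ ^ 2)
        - (b - a) * ∑ n ∈ Finset.Ioo (-N : ℤ) N,
          ((N : ℝ) ^ 2 - n ^ 2) * ‖fourierCoeffOn hab f n‖ ^ 2)
      ≤ ∫ x in a..b, ‖f' x‖ ^ 2 := by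
  have hba : 0 < b - a := sub_pos.2 hab
  have hf_cont : ContinuousOn f (Icc a b) := fun x hx =>
    (hf x (Icc_subset_uIcc hx)).continuousAt.continuousWithinAt
  have hf'_int : IntervalIntegrable f' volume a b :=
    (intervalIntegrable_iff_integrableOn_Ioc_of_le hab.le).2 (hf'.integrable one_le_two)
  have parseval := hasSum_sq_fourierCoeffOn hab (memLp_restrict_Ioc_of_continuousOn_Icc hf_cont 2)
  have parseval' := hasSum_sq_fourierCoeffOn hab hf'
  simp only [norm_sq_fourierCoeffOn_deriv_of_periodic hab hf hf'_int hper] at parseval'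
  have low_le := sum_le_hasSum (Finset.Ioo (-N : ℤ) N) (fun n hn => ?_)
    (parseval'.sub (parseval.mul_left ((2 * π / (b - a)) ^ 2 * N ^ 2)))
  · calc _ = (b - a) * ((2 * π / (b - a)) ^ 2 * N ^ 2 * ((b - a)⁻¹ • ∫ x in a..b, ‖f x‖ ^ 2)
          + ∑ n ∈ Finset.Ioo (-N : ℤ) N,
            ((2 * π / (b - a)) ^ 2 * (n ^ 2 * ‖fourierCoeffOn hab f n‖ ^ 2)
              - (2 * π / (b - a)) ^ 2 * N ^ 2 * ‖fourierCoeffOn hab f n‖ ^ 2)) := by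
          simp only [sub_mul, mul_assoc, Finset.sum_sub_distrib, ← Finset.mul_sum, smul_eq_mul]
          field_simp
          ring
      _ ≤ (b - a) * ((b - a)⁻¹ • ∫ x in a..b, ‖f' x‖ ^ 2) := by gcongr; linarith
      _ = _ := by rw [smul_eq_mul, mul_inv_cancel_left₀ hba.ne']
  · have hNn : (N : ℝ) ^ 2 ≤ n ^ 2 := by
      rw [Finset.mem_Ioo, ← abs_lt, not_lt] at hn
      have : (N : ℤ) ^ 2 ≤ n ^ 2 := sq_le_sq.2 (by simpa using hn)
      exact_mod_cast this
    rw [mul_assoc, ← mul_sub, ← sub_mul]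
    have := sub_nonneg.2 hNn
    positivity

lemma sum_sq_norm_fourierCoeffOn_le_of_norm_sub_le {v w : ℝ → ℂ} {ε : ℝ}
    (hv : ContinuousOn v (Icc a b)) (hw : ContinuousOn w (Icc a b))
    (hvw : ∀ x ∈ Icc a b, ‖v x - w x‖ ≤ ε * ‖w x‖) {s : Finset ℤ}
    (hs : ∀ n ∈ s, fourierCoeffOn hab v n = 0) :
    (b - a) * ∑ n ∈ s, ‖fourierCoeffOn hab w n‖ ^ 2 ≤ ε ^ 2 * ∫ x in a..b, ‖w x‖ ^ 2 := by
  have hba : 0 < b - a := sub_pos.2 hab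
  have hcoeff : ∀ n ∈ s, ‖fourierCoeffOn hab w n‖ ^ 2
      = ‖fourierCoeffOn hab (fun x => v x - w x) n‖ ^ 2 := fun n hn => by
    rw [fourierCoeffOn_sub hab (hv.intervalIntegrable_of_Icc hab.le)
      (hw.intervalIntegrable_of_Icc hab.le), hs n hn, zero_sub, norm_neg]
  have bessel := sum_le_hasSum s (fun n _ => sq_nonneg _) (hasSum_sq_fourierCoeffOn hab
    (memLp_restrict_Ioc_of_continuousOn_Icc (hv.sub hw) 2))
  calc (b - a) * ∑ n ∈ s, ‖fourierCoeffOn hab w n‖ ^ 2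
      ≤ (b - a) * ((b - a)⁻¹ • ∫ x in a..b, ‖v x - w x‖ ^ 2) := by
        rw [Finset.sum_congr rfl hcoeff]
        gcongr
        exact bessel
    _ = ∫ x in a..b, ‖v x - w x‖ ^ 2 := by rw [smul_eq_mul, mul_inv_cancel_left₀ hba.ne']
    _ ≤ ∫ x in a..b, ε ^ 2 * ‖w x‖ ^ 2 := by
        refine intervalIntegral.integral_mono_on hab.le
          (((hv.sub hw).norm.pow 2).intervalIntegrable_of_Icc hab.le)
          ((continuousOn_const.mul (hw.norm.pow 2)).intervalIntegrable_of_Icc hab.le) fun x hx => ?_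
        rw [← mul_pow]
        gcongr
        exact hvw x hx
    _ = _ := intervalIntegral.integral_const_mul _ _

lemma wirtinger_of_near_high_modes {v w w' : ℝ → ℂ} {ε : ℝ} {N : ℕ}
    (hv : ContinuousOn v (Icc a b)) (hw : ∀ x ∈ uIcc a b, HasDerivAt w (w' x) x)
    (hw' : MemLp w' 2 (volume.restrict (Ioc a b))) (hper : w b = w a)
    (hvw : ∀ x ∈ Icc a b, ‖v x - w x‖ ≤ ε * ‖w x‖)
    (hmodes : ∀ n ∈ Finset.Ioo (-N : ℤ) N, fourierCoeffOn hab v n = 0) :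
    (2 * π / (b - a)) ^ 2 * (N ^ 2 * (1 - ε ^ 2) * ∫ x in a..b, ‖w x‖ ^ 2)
      ≤ ∫ x in a..b, ‖w' x‖ ^ 2 := by
  have := sub_pos.2 hab
  have hw_cont : ContinuousOn w (Icc a b) := fun x hx =>
    (hw x (Icc_subset_uIcc hx)).continuousAt.continuousWithinAt
  have low_modes : (b - a) * ∑ n ∈ Finset.Ioo (-N : ℤ) N,
      ((N : ℝ) ^ 2 - n ^ 2) * ‖fourierCoeffOn hab w n‖ ^ 2
        ≤ N ^ 2 * (ε ^ 2 * ∫ x in a..b, ‖w x‖ ^ 2) := calc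
    _ ≤ (b - a) * ∑ n ∈ Finset.Ioo (-N : ℤ) N, (N : ℝ) ^ 2 * ‖fourierCoeffOn hab w n‖ ^ 2 := by
      gcongr with n
      exact sub_le_self _ (sq_nonneg _)
    _ = N ^ 2 * ((b - a) * ∑ n ∈ Finset.Ioo (-N : ℤ) N, ‖fourierCoeffOn hab w n‖ ^ 2) := by
      rw [← Finset.mul_sum, mul_left_comm]
    _ ≤ _ := mul_le_mul_of_nonneg_left
      (sum_sq_norm_fourierCoeffOn_le_of_norm_sub_le hab hv hw_cont hvw hmodes) (by positivity)
  refine le_trans ?_ (wirtinger_sub_low_modes hab hw hw' hper N)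
  gcongr
  linarith

lemma norm_fourierCoeffOn_le {f : ℝ → ℂ} {C : ℝ} (hf : ∀ x ∈ Ioc a b, ‖f x‖ ≤ C) (n : ℤ) :
    ‖fourierCoeffOn hab f n‖ ≤ C := by
  have hba : 0 < b - a := sub_pos.2 hab
  have hint := intervalIntegral.norm_integral_le_of_norm_le_const (a := a) (b := b) (C := C)
    (f := fun x => fourier (-n) (x : AddCircle (b - a)) • f x) fun x hx => by
      rw [norm_smul, fourier_apply, Circle.norm_coe, one_mul]
      exact hf x (uIoc_of_le hab.le ▸ hx)
  rw [fourierCoeffOn_eq_integral, norm_smul, norm_eq_abs, abs_of_pos (one_div_pos.2 hba)]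
  calc 1 / (b - a) * _ ≤ 1 / (b - a) * (C * |b - a|) := by gcongr
    _ = C := by rw [abs_of_pos hba]; field_simp

end FourierCoefficients

section PartialDerivatives

variable {E : Type*} [NormedAddCommGroup E]

lemma continuous_space_slice {f : ℝ → ℝ → E} {J : Set ℝ}
    (hf : ContinuousOn f.uncurry (univ ×ˢ J)) {t : ℝ} (ht : t ∈ J) : Continuous fun x => f x t :=
  hf.comp_continuous (f := fun x => (x, t)) (by fun_prop) fun _ => ⟨mem_univ _, ht⟩

variable [NormedSpace ℝ E] {f : ℝ → ℝ → E} {J : Set ℝ}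

/-- The spatial partial derivative `∂f/∂x` of a function of space `x` and time `t`. -/
noncomputable def spaceDeriv (f : ℝ → ℝ → E) (x t : ℝ) : E := deriv (fun y => f y t) x

/-- The time partial derivative `∂f/∂t` of a function of space `x` and time `t`. -/
noncomputable def timeDeriv (f : ℝ → ℝ → E) (x t : ℝ) : E := deriv (f x) t

lemma hasDerivAt_space_slice {f' : ℝ × ℝ →L[ℝ] E} {x t : ℝ}
    (hf : HasFDerivWithinAt f.uncurry f' (univ ×ˢ J) (x, t)) (ht : t ∈ J) :
    HasDerivAt (fun y => f y t) (f' (1, 0)) x :=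
  hf.comp_hasDerivAt (f := fun y => (y, t)) x ((hasDerivAt_id x).prodMk (hasDerivAt_const x t))
    (.of_forall fun _ => ⟨mem_univ _, ht⟩)

lemma hasDerivAt_time_slice {f' : ℝ × ℝ →L[ℝ] E} {x t : ℝ}
    (hf : HasFDerivAt f.uncurry f' (x, t)) : HasDerivAt (f x) (f' (0, 1)) t :=
  hf.comp_hasDerivAt (f := fun s => (x, s)) t ((hasDerivAt_const t x).prodMk (hasDerivAt_id t))

lemma hasFDerivAt_uncurry (hf : DifferentiableOn ℝ f.uncurry (univ ×ˢ J)) (hJ : IsOpen J) (x : ℝ)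
    {t : ℝ} (ht : t ∈ J) : HasFDerivAt f.uncurry (fderiv ℝ f.uncurry (x, t)) (x, t) :=
  (hf.differentiableAt ((isOpen_univ.prod hJ).mem_nhds ⟨mem_univ x, ht⟩)).hasFDerivAt

lemma hasDerivAt_spaceDeriv (hf : DifferentiableOn ℝ f.uncurry (univ ×ˢ J)) (x : ℝ) {t : ℝ}
    (ht : t ∈ J) : HasDerivAt (fun y => f y t) (spaceDeriv f x t) x :=
  (hasDerivAt_space_slice (hf (x, t) ⟨mem_univ x, ht⟩).hasFDerivWithinAt
    ht).differentiableAt.hasDerivAt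

lemma hasDerivAt_timeDeriv (hf : DifferentiableOn ℝ f.uncurry (univ ×ˢ J)) (hJ : IsOpen J) (x : ℝ)
    {t : ℝ} (ht : t ∈ J) : HasDerivAt (f x) (timeDeriv f x t) t :=
  (hasDerivAt_time_slice (hasFDerivAt_uncurry hf hJ x ht)).differentiableAt.hasDerivAt

lemma contDiffOn_spaceDeriv {m n : WithTop ℕ∞} (hf : ContDiffOn ℝ n f.uncurry (univ ×ˢ J))
    (hJ : UniqueDiffOn ℝ J) (hmn : m + 1 ≤ n) :
    ContDiffOn ℝ m (spaceDeriv f).uncurry (univ ×ˢ J) := by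
  have hfd := hf.differentiableOn (by rintro rfl; simp at hmn)
  refine ((hf.fderivWithin (uniqueDiffOn_univ.prod hJ) hmn).clm_apply
    (contDiffOn_const (c := ((1, 0) : ℝ × ℝ)))).congr fun q hq => ?_
  exact (hasDerivAt_space_slice (hfd q hq).hasFDerivWithinAt hq.2).deriv

lemma contDiffOn_timeDeriv {m n : WithTop ℕ∞} (hf : ContDiffOn ℝ n f.uncurry (univ ×ˢ J))
    (hJ : IsOpen J) (hmn : m + 1 ≤ n) : ContDiffOn ℝ m (timeDeriv f).uncurry (univ ×ˢ J) := by
  have hfd := hf.differentiableOn (by rintro rfl; simp at hmn)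
  refine ((hf.fderiv_of_isOpen (isOpen_univ.prod hJ) hmn).clm_apply
    (contDiffOn_const (c := ((0, 1) : ℝ × ℝ)))).congr fun q hq => ?_
  exact (hasDerivAt_time_slice (hasFDerivAt_uncurry hfd hJ q.1 hq.2)).deriv

lemma spaceDeriv_timeDeriv_comm (hf : ContDiffOn ℝ 2 f.uncurry (univ ×ˢ J)) (hJ : IsOpen J)
    (x : ℝ) {t : ℝ} (ht : t ∈ J) :
    spaceDeriv (timeDeriv f) x t = timeDeriv (spaceDeriv f) x t := by
  have hfd := hf.differentiableOn two_ne_zero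
  have hat : ContDiffAt ℝ 2 f.uncurry (x, t) :=
    hf.contDiffAt ((isOpen_univ.prod hJ).mem_nhds ⟨mem_univ x, ht⟩)
  have hD : HasFDerivAt (fderiv ℝ f.uncurry) (fderiv ℝ (fderiv ℝ f.uncurry) (x, t)) (x, t) :=
    ((hat.fderiv_right (m := 1) le_rfl).differentiableAt one_ne_zero).hasFDerivAt
  have htime : (fun y => timeDeriv f y t) = fun y => fderiv ℝ f.uncurry (y, t) (0, 1) :=
    funext fun y => (hasDerivAt_time_slice (hasFDerivAt_uncurry hfd hJ y ht)).deriv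
  have hspace : spaceDeriv f x =ᶠ[nhds t] fun s => fderiv ℝ f.uncurry (x, s) (1, 0) := by
    filter_upwards [hJ.mem_nhds ht] with s hs
    exact (hasDerivAt_space_slice (hasFDerivAt_uncurry hfd hJ x hs).hasFDerivWithinAt hs).deriv
  have hDspace := hasDerivAt_space_slice (f := fun y s => fderiv ℝ f.uncurry (y, s))
    hD.hasFDerivWithinAt ht
  have hDtime := hasDerivAt_time_slice (f := fun y s => fderiv ℝ f.uncurry (y, s)) hD
  rw [spaceDeriv, htime, (hDspace.clm_apply (hasDerivAt_const x _)).deriv, timeDeriv,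
    hspace.deriv_eq, (hDtime.clm_apply (hasDerivAt_const t _)).deriv]
  simpa using! (hat.isSymmSndFDerivAt (by simp)).eq (1, 0) (0, 1)

lemma hasDerivAt_integral_of_continuousOn {f' : ℝ → ℝ → E}
    (hf : ContinuousOn f.uncurry (univ ×ˢ J)) (hf' : ContinuousOn f'.uncurry (univ ×ˢ J))
    (hd : ∀ x, ∀ t ∈ J, HasDerivAt (f x) (f' x t) t) (a b : ℝ) {t : ℝ} (ht : J ∈ nhds t) :
    HasDerivAt (fun s => ∫ x in a..b, f x s) (∫ x in a..b, f' x t) t := by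
  obtain ⟨s, hs, hsJ, hs_compact⟩ := local_compact_nhds ht
  obtain ⟨C, hC⟩ := (isCompact_uIcc (a := a) (b := b)).prod hs_compact
    |>.exists_bound_of_continuousOn (hf'.mono (prod_mono (subset_univ _) hsJ))
  refine (intervalIntegral.hasDerivAt_integral_of_dominated_loc_of_deriv_le
    (F := fun s x => f x s) (F' := fun s x => f' x s) (bound := fun _ => C) hs
    ?_ ?_ ?_ ?_ ?_ ?_).2
  · filter_upwards [ht] with r hr
    exact (continuous_space_slice hf hr).aestronglyMeasurable
  · exact (continuous_space_slice hf (mem_of_mem_nhds ht)).intervalIntegrable _ _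
  · exact (continuous_space_slice hf' (mem_of_mem_nhds ht)).aestronglyMeasurable
  · exact .of_forall fun x hx r hr => hC (x, r) ⟨uIoc_subset_uIcc hx, hr⟩
  · exact continuous_const.intervalIntegrable _ _
  · exact .of_forall fun x _ r hr => hd x r (hsJ hr)

lemma hasDerivAt_fourierCoeffOn {f f' : ℝ → ℝ → ℂ} {a b t : ℝ} (hab : a < b)
    (hf : ContinuousOn f.uncurry (univ ×ˢ J)) (hf' : ContinuousOn f'.uncurry (univ ×ˢ J))
    (hd : ∀ x, ∀ t ∈ J, HasDerivAt (f x) (f' x t) t) (ht : J ∈ nhds t) (n : ℤ) :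
    HasDerivAt (fun s => fourierCoeffOn hab (fun x => f x s) n)
      (fourierCoeffOn hab (fun x => f' x t) n) t := by
  have hφ : ContinuousOn (fun q : ℝ × ℝ => fourier (-n) (q.1 : AddCircle (b - a))) (univ ×ˢ J) :=
    ((continuous_fourier_coe (b - a) (-n)).comp continuous_fst).continuousOn
  simp only [fourierCoeffOn_eq_integral]
  exact (hasDerivAt_integral_of_continuousOn
    (f := fun x s => fourier (-n) (x : AddCircle (b - a)) • f x s)
    (f' := fun x s => fourier (-n) (x : AddCircle (b - a)) • f' x s) (hφ.smul hf) (hφ.smul hf')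
    (fun x s hs => (hd x s hs).fun_const_smul _) a b ht).fun_const_smul _

lemma periodic_deriv {g : ℝ → E} {c : ℝ} (hg : Function.Periodic g c) :
    Function.Periodic (deriv g) c := fun x => by
  rw [← deriv_comp_add_const, funext hg]

end PartialDerivatives

section ODE

lemma exists_le_mul_exp_of_deriv_le {g g' : ℝ → ℝ} {c T : ℝ} (hT : 0 ≤ T)
    (hbdd : BddAbove (g '' Icc 0 T)) (hg : ∀ t, T ≤ t → HasDerivAt g (g' t) t)
    (hle : ∀ t, T ≤ t → g' t ≤ -c * g t) :
    ∃ C, 0 < C ∧ ∀ t, 0 ≤ t → g t ≤ C * exp (-c * t) := by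
  obtain ⟨B, hB⟩ := hbdd
  have early : ∀ t ∈ Icc 0 T, g t ≤ max B 1 := fun t ht =>
    (hB (mem_image_of_mem g ht)).trans (le_max_left _ _)
  have late : ∀ t, T ≤ t → g t ≤ max B 1 * exp (-c * (t - T)) := fun t ht => by
    rw [← gronwallBound_ε0]
    exact le_gronwallBound_of_liminf_deriv_right_le (f' := g')
      (fun s hs => (hg s hs.1).continuousAt.continuousWithinAt)
      (fun s hs _ hr => (hg s hs.1).hasDerivWithinAt.liminf_right_slope_le hr)
      (early T ⟨hT, le_rfl⟩) (fun s hs => by simpa using hle s hs.1) t ⟨ht, le_rfl⟩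
  refine ⟨max B 1 * exp (|c| * T), by positivity, fun t ht => ?_⟩
  rw [mul_assoc, ← exp_add]
  rcases le_total t T with htT | hTt
  · have : c * t ≤ |c| * T := by gcongr; exact le_abs_self c
    exact (early t ⟨ht, htT⟩).trans <|
      le_mul_of_one_le_right (by positivity) (one_le_exp (by linarith))
  · have : c * T ≤ |c| * T := by gcongr; exact le_abs_self c
    refine (late t hTt).trans ?_
    gcongr
    linarith

lemma eq_zero_of_hasDerivAt_smul_of_isBigO_one {E : Type*} [NormedAddCommGroup E]
    [NormedSpace ℝ E] {M : ℝ → E} {c t₀ : ℝ} (hc : 0 < c)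
    (hM : ∀ t, t₀ < t → HasDerivAt M (c • M t) t) (hbdd : M =O[atTop] fun _ => (1 : ℝ)) {t : ℝ}
    (ht : t₀ < t) : M t = 0 := by
  have hderiv : ∀ s, t₀ < s → HasDerivAt (fun s => exp (-c * s) • M s) 0 s := fun s hs => by
    refine (((hasDerivAt_id s).const_mul (-c)).exp.smul (hM s hs)).congr_deriv ?_
    rw [smul_smul, ← add_smul, id]
    ring_nf
    exact zero_smul ℝ (M s)
  have hconst : ∀ s, t₀ < s → exp (-c * s) • M s = exp (-c * t) • M t := fun s hs =>
    isOpen_Ioi.is_const_of_deriv_eq_zero (f := fun s => exp (-c * s) • M s) isPreconnected_Ioi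
      (fun r hr => (hderiv r hr).differentiableAt.differentiableWithinAt)
      (fun r hr => (hderiv r hr).deriv) hs ht
  have hexp : Tendsto (fun s => exp (-c * s)) atTop (nhds 0) :=
    tendsto_exp_atBot.comp (tendsto_id.const_mul_atTop_of_neg (neg_neg_of_pos hc))
  have hlim : Tendsto (fun s => exp (-c * s) • M s) atTop (nhds 0) :=
    hexp.zero_smul_isBoundedUnder_le (by simpa using! hbdd.isBoundedUnder_le)
  have := tendsto_nhds_unique hlim <| tendsto_const_nhds.congr' <| by
    filter_upwards [eventually_gt_atTop t₀] with s hs using (hconst s hs).symm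
  exact (smul_eq_zero.1 this.symm).resolve_left (exp_pos _).ne'

end ODE

section DirichletEnergy

open MeasureTheory

lemma integral_mul_deriv_eq_neg_of_periodic {u v u' v' : ℝ → ℝ} {a b : ℝ}
    (hu : ∀ x ∈ uIcc a b, HasDerivAt u (u' x) x) (hv : ∀ x ∈ uIcc a b, HasDerivAt v (v' x) x)
    (hu' : IntervalIntegrable u' volume a b) (hv' : IntervalIntegrable v' volume a b)
    (hub : u b = u a) (hvb : v b = v a) :
    ∫ x in a..b, u x * v' x = -∫ x in a..b, u' x * v x := by
  rw [intervalIntegral.integral_mul_deriv_eq_deriv_mul hu hv hu' hv', hub, hvb, sub_self, zero_sub]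

lemma bddAbove_integral_image {h : ℝ → ℝ → ℝ} {I : Set ℝ} (hI : IsCompact I)
    (hh : ContinuousOn h.uncurry (univ ×ˢ I)) (a b : ℝ) :
    BddAbove ((fun t => ∫ x in a..b, h x t) '' I) := by
  obtain ⟨C, hC⟩ := (isCompact_uIcc (a := a) (b := b)).prod hI
    |>.exists_bound_of_continuousOn (hh.mono (prod_mono_left (subset_univ _)))
  refine ⟨C * |b - a|, forall_mem_image.2 fun t ht => (le_abs_self _).trans ?_⟩
  exact intervalIntegral.norm_integral_le_of_norm_le_const fun x hx =>
    hC (x, t) ⟨uIoc_subset_uIcc hx, ht⟩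

lemma hasDerivAt_integral_sq_spaceDeriv {f : ℝ → ℝ → ℝ} {J : Set ℝ} {c t : ℝ}
    (hf : ContDiffOn ℝ 2 f.uncurry (univ ×ˢ J)) (hJ : IsOpen J)
    (hper : ∀ s ∈ J, Function.Periodic (fun x => f x s) c) (ht : t ∈ J) (a : ℝ) :
    HasDerivAt (fun s => ∫ x in a..a + c, spaceDeriv f x s ^ 2)
      (-2 * ∫ x in a..a + c, spaceDeriv (spaceDeriv f) x t * timeDeriv f x t) t := by
  have hfx := contDiffOn_spaceDeriv hf hJ.uniqueDiffOn (m := 1) le_rfl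
  have hft := contDiffOn_timeDeriv hf hJ (m := 1) le_rfl
  have hfxt := contDiffOn_timeDeriv hfx hJ (m := 0) le_rfl
  have slice_int : ∀ {h : ℝ → ℝ → ℝ}, ContDiffOn ℝ 1 h.uncurry (univ ×ˢ J) →
      IntervalIntegrable (fun x => spaceDeriv h x t) volume a (a + c) := fun hh =>
    (continuous_space_slice (contDiffOn_spaceDeriv hh hJ.uniqueDiffOn (m := 0) le_rfl).continuousOn
      ht).intervalIntegrable _ _
  have hfx_per : spaceDeriv f (a + c) t = spaceDeriv f a t := periodic_deriv (hper t ht) a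
  have hft_per : timeDeriv f (a + c) t = timeDeriv f a t := EventuallyEq.deriv_eq <| by
    filter_upwards [hJ.mem_nhds ht] with s hs using hper s hs a
  have by_parts := integral_mul_deriv_eq_neg_of_periodic
    (fun x _ => hasDerivAt_spaceDeriv (hfx.differentiableOn one_ne_zero) x ht)
    (fun x _ => hasDerivAt_spaceDeriv (hft.differentiableOn one_ne_zero) x ht)
    (slice_int hfx) (slice_int hft) hfx_per hft_per
  refine (hasDerivAt_integral_of_continuousOn (f := fun x s => spaceDeriv f x s ^ 2)
    (f' := fun x s => 2 * (spaceDeriv f x s * timeDeriv (spaceDeriv f) x s))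
    (hfx.continuousOn.fun_pow 2)
    (continuousOn_const.fun_mul (hfx.continuousOn.fun_mul hfxt.continuousOn))
    (fun x s hs => ?_) a (a + c) (hJ.mem_nhds ht)).congr_deriv ?_
  · refine ((hasDerivAt_timeDeriv (hfx.differentiableOn one_ne_zero) hJ x hs).pow 2).congr_deriv ?_
    simp [mul_assoc]
  · simp only [← spaceDeriv_timeDeriv_comm hf hJ _ ht]
    rw [intervalIntegral.integral_const_mul, by_parts, mul_neg, neg_mul]

end DirichletEnergy

lemma tendstoUniformly_rpow_one {ι α : Type*} {F : ι → α → ℝ} {l : Filter ι}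
    (hF : TendstoUniformly F (fun _ => 1) l) (r : ℝ) :
    TendstoUniformly (fun i x => F i x ^ r) (fun _ => 1) l := by
  rw [Metric.tendstoUniformly_iff] at hF ⊢
  intro ε hε
  obtain ⟨δ, hδ, h⟩ := Metric.continuousAt_iff.1
    (continuousAt_rpow_const 1 r (Or.inl one_ne_zero)) ε hε
  filter_upwards [hF δ hδ] with i hi x
  rw [dist_comm, ← one_rpow r]
  exact h (dist_comm (1 : ℝ) _ ▸ hi x)

section StaticEstimates

variable {k : ℝ → ℝ}

lemma hasDerivAt_rpow_comp (hk : Differentiable ℝ k) (hpos : ∀ x, 0 < k x) (r x : ℝ) :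
    HasDerivAt (fun x => k x ^ r) (r * (k x ^ (r - 1) * deriv k x)) x :=
  ((hk x).hasDerivAt.rpow_const (Or.inl (hpos x).ne')).congr_deriv (by ring)

lemma wirtinger_deriv_of_rpow_modes_eq_zero (hk : ContDiff ℝ 2 k)
    (hper : Function.Periodic k (2 * π)) (hpos : ∀ x, 0 < k x) {r ε : ℝ} (hr : r ≠ 0)
    (hε : ∀ x, |k x ^ (r - 1) - 1| ≤ ε) {N : ℕ}
    (hmodes : ∀ n ∈ Finset.Ioo (-N : ℤ) N, n ≠ 0 →
      fourierCoeffOn two_pi_pos (fun x => ((k x ^ r : ℝ) : ℂ)) n = 0) :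
    N ^ 2 * (1 - ε ^ 2) * ∫ x in 0..2 * π, deriv k x ^ 2
      ≤ ∫ x in 0..2 * π, deriv (deriv k) x ^ 2 := by
  have hk' : ContDiff ℝ 1 (deriv k) := hk.deriv'
  have hk'_cont := hk'.continuous
  have : Continuous (deriv (deriv k)) := hk'.continuous_deriv_one
  have hpow_cont : Continuous fun x => k x ^ (r - 1) :=
    hk.continuous.rpow_const fun x => Or.inl (hpos x).ne'
  set v : ℝ → ℂ := fun x => ((k x ^ (r - 1) * deriv k x : ℝ) : ℂ) with hv
  have hv_cont : Continuous v := by fun_prop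
  have hv_modes : ∀ n ∈ Finset.Ioo (-N : ℤ) N, fourierCoeffOn two_pi_pos v n = 0 := by
    intro n hn
    have hderiv := fourierCoeffOn_deriv_of_periodic two_pi_pos (n := n)
      (f := fun x => ((k x ^ r : ℝ) : ℂ)) (f' := (r : ℂ) • v)
      (fun x _ => by
        simpa [hv] using
          (hasDerivAt_rpow_comp (hk.differentiable two_ne_zero) hpos r x).ofReal_comp)
      ((hv_cont.const_smul _).intervalIntegrable _ _) (by simpa using congrArg (· ^ r) (hper 0))
    rw [fourierCoeffOn.const_smul] at hderiv
    refine (smul_eq_zero.1 (hderiv.trans ?_)).resolve_left (by exact_mod_cast hr)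
    rcases eq_or_ne n 0 with rfl | hn0
    · simp
    · rw [hmodes n hn hn0, mul_zero]
  have hv_near : ∀ x ∈ Icc 0 (2 * π), ‖v x - (deriv k x : ℝ)‖ ≤ ε * ‖((deriv k x : ℝ) : ℂ)‖ := by
    intro x _
    rw [hv, ← Complex.ofReal_sub, Complex.norm_real, Complex.norm_real, ← sub_one_mul, norm_mul]
    gcongr
    exact hε x
  have := wirtinger_of_near_high_modes two_pi_pos (w := fun x => ((deriv k x : ℝ) : ℂ))
    (w' := fun x => ((deriv (deriv k) x : ℝ) : ℂ)) hv_cont.continuousOn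
    (fun x _ => (hk'.differentiable one_ne_zero x).hasDerivAt.ofReal_comp)
    (memLp_restrict_Ioc_of_continuousOn_Icc (by fun_prop) 2)
    (by simpa using periodic_deriv hper 0) hv_near hv_modes
  simpa [two_pi_pos.ne'] using this

/-- The right-hand side `p k^(1+1/p) k'' + p k^(2+1/p) - p k` of the rescaled curve shortening
equation, as a function of the values of `k` and `k''`. -/
noncomputable def flowSpeed (p k k'' : ℝ) : ℝ :=
  p * k ^ (1 + 1 / p) * k'' + p * k ^ (2 + 1 / p) - p * k

lemma integral_mul_flowSpeed {p : ℝ} (hp : p ≠ 0) (hk : ContDiff ℝ 2 k)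
    (hper : Function.Periodic k (2 * π)) (hpos : ∀ x, 0 < k x) :
    ∫ x in 0..2 * π, deriv (deriv k) x * flowSpeed p (k x) (deriv (deriv k) x)
      = p * (∫ x in 0..2 * π, k x ^ (1 + 1 / p) * deriv (deriv k) x ^ 2)
        - ∫ x in 0..2 * π, ((2 * p + 1) * k x ^ (1 + 1 / p) - p) * deriv k x ^ 2 := by
  have hk' : ContDiff ℝ 1 (deriv k) := hk.deriv'
  have hk_cont := hk.continuous
  have hk'_cont := hk'.continuous
  have hk''_cont : Continuous (deriv (deriv k)) := hk'.continuous_deriv_one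
  have hpow_cont : ∀ r : ℝ, Continuous fun x => k x ^ r := fun r =>
    hk.continuous.rpow_const fun x => Or.inl (hpos x).ne'
  have := hpow_cont (1 + 1 / p)
  have := hpow_cont (2 + 1 / p)
  have hu : ∀ x, HasDerivAt (fun x => p * k x ^ (2 + 1 / p) - p * k x)
      (((2 * p + 1) * k x ^ (1 + 1 / p) - p) * deriv k x) x := fun x => by
    have hkd := hk.differentiable two_ne_zero
    refine (((hasDerivAt_rpow_comp hkd hpos (2 + 1 / p) x).const_mul p).sub
      ((hkd x).hasDerivAt.const_mul p)).congr_deriv ?_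
    rw [show 2 + 1 / p - 1 = 1 + 1 / p by ring]
    field_simp
  have by_parts := integral_mul_deriv_eq_neg_of_periodic (a := 0) (b := 2 * π) (fun x _ => hu x)
    (fun x _ => (hk'.differentiable one_ne_zero x).hasDerivAt)
    (Continuous.intervalIntegrable (by fun_prop) _ _) (hk''_cont.intervalIntegrable _ _)
    (by simpa using congrArg (fun y => p * y ^ (2 + 1 / p) - p * y) (hper 0))
    (by simpa using periodic_deriv hper 0)
  simp only [mul_assoc, ← sq] at by_parts
  rw [sub_eq_add_neg, ← by_parts, ← intervalIntegral.integral_const_mul,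
    ← intervalIntegral.integral_add (Continuous.intervalIntegrable (by fun_prop) _ _)
      (Continuous.intervalIntegrable (by fun_prop) _ _)]
  refine intervalIntegral.integral_congr fun x _ => ?_
  simp only [flowSpeed]
  ring

/-- Dissipation-to-energy ratio guaranteed for the flow when the powers of the curvature entering
the estimate are within `ε` of `1`; at `ε = 0` it is the sharp rate `3 p - 1`. -/
def dissipationRate (p ε : ℝ) : ℝ :=
  p * (1 - ε) * (4 * (1 - ε ^ 2)) - ((2 * p + 1) * (1 + ε) - p)

lemma dissipationRate_mul_integral_le {p ε : ℝ} (hp : 0 < p) (hε₁ : ε ≤ 1)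
    (hk : ContDiff ℝ 2 k) (hper : Function.Periodic k (2 * π)) (hpos : ∀ x, 0 < k x)
    (hdiff : ∀ x, |k x ^ (1 + 1 / p) - 1| ≤ ε) (hweight : ∀ x, |k x ^ (-1 / p - 1) - 1| ≤ ε)
    (hmodes : ∀ n : ℤ, n ^ 2 = 1 →
      fourierCoeffOn two_pi_pos (fun x => ((k x ^ (-1 / p) : ℝ) : ℂ)) n = 0) :
    dissipationRate p ε * ∫ x in 0..2 * π, deriv k x ^ 2
      ≤ ∫ x in 0..2 * π, deriv (deriv k) x * flowSpeed p (k x) (deriv (deriv k) x) := by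
  have hk' : ContDiff ℝ 1 (deriv k) := hk.deriv'
  have hk'_cont := hk'.continuous
  have : Continuous (deriv (deriv k)) := hk'.continuous_deriv_one
  have : Continuous fun x => k x ^ (1 + 1 / p) :=
    hk.continuous.rpow_const fun x => Or.inl (hpos x).ne'
  have wirtinger : 4 * (1 - ε ^ 2) * ∫ x in 0..2 * π, deriv k x ^ 2
      ≤ ∫ x in 0..2 * π, deriv (deriv k) x ^ 2 := by
    have := wirtinger_deriv_of_rpow_modes_eq_zero (N := 2) hk hper hpos
      (div_ne_zero (neg_ne_zero.2 one_ne_zero) hp.ne') hweight fun n hn hn0 => hmodes n <| by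
        rw [Finset.mem_Ioo] at hn
        obtain rfl | rfl : n = -1 ∨ n = 1 := by omega
        all_goals norm_num
    norm_num at this
    exact this
  have diffusion : (1 - ε) * ∫ x in 0..2 * π, deriv (deriv k) x ^ 2
      ≤ ∫ x in 0..2 * π, k x ^ (1 + 1 / p) * deriv (deriv k) x ^ 2 := by
    rw [← intervalIntegral.integral_const_mul]
    refine intervalIntegral.integral_mono_on two_pi_pos.le
      (Continuous.intervalIntegrable (by fun_prop) _ _)
      (Continuous.intervalIntegrable (by fun_prop) _ _) fun x _ => ?_
    gcongr
    linarith [(abs_le.1 (hdiff x)).1]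
  have reaction : ∫ x in 0..2 * π, ((2 * p + 1) * k x ^ (1 + 1 / p) - p) * deriv k x ^ 2
      ≤ ((2 * p + 1) * (1 + ε) - p) * ∫ x in 0..2 * π, deriv k x ^ 2 := by
    rw [← intervalIntegral.integral_const_mul]
    refine intervalIntegral.integral_mono_on two_pi_pos.le
      (Continuous.intervalIntegrable (by fun_prop) _ _)
      (Continuous.intervalIntegrable (by fun_prop) _ _) fun x _ => ?_
    gcongr
    linarith [(abs_le.1 (hdiff x)).2]
  rw [integral_mul_flowSpeed hp.ne' hk hper hpos, dissipationRate, sub_mul]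
  refine sub_le_sub ?_ reaction
  rw [mul_assoc, mul_assoc]
  gcongr
  exact (mul_le_mul_of_nonneg_left wirtinger (sub_nonneg.2 hε₁)).trans diffusion

end StaticEstimates

/-- `K θ τ` is a positive, `2π`-periodic in `θ`, classical solution for times `τ > 0` of the
rescaled curve shortening equation for normalized curvatures as functions of the tangent angle. -/
structure IsRescaledFlow (p : ℝ) (K : ℝ → ℝ → ℝ) : Prop where
  contDiffOn : ContDiffOn ℝ 2 K.uncurry (univ ×ˢ Ioi 0)
  periodic : ∀ τ, 0 < τ → Function.Periodic (fun θ => K θ τ) (2 * π)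
  pos : ∀ θ τ, 0 < τ → 0 < K θ τ
  timeDeriv_eq : ∀ θ τ, 0 < τ →
    timeDeriv K θ τ = flowSpeed p (K θ τ) (spaceDeriv (spaceDeriv K) θ τ)

lemma rpow_mul_flowSpeed {p k : ℝ} (hp : p ≠ 0) (hk : 0 < k) (k'' : ℝ) :
    -1 / p * k ^ (-1 / p - 1) * flowSpeed p k k'' = k ^ (-1 / p) - k - k'' := by
  have h₁ : k ^ (-1 / p - 1) * k ^ (1 + 1 / p) = 1 := by
    rw [← rpow_add hk, show -1 / p - 1 + (1 + 1 / p) = 0 by ring, rpow_zero]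
  have h₂ : k ^ (-1 / p - 1) * k ^ (2 + 1 / p) = k := by
    rw [← rpow_add hk, show -1 / p - 1 + (2 + 1 / p) = 1 by ring, rpow_one]
  have h₃ : k ^ (-1 / p - 1) * k = k ^ (-1 / p) := by
    rw [← rpow_add_one hk.ne', sub_add_cancel]
  calc -1 / p * k ^ (-1 / p - 1) * flowSpeed p k k''
      = -(k ^ (-1 / p - 1) * k ^ (1 + 1 / p) * k'') - k ^ (-1 / p - 1) * k ^ (2 + 1 / p)
        + k ^ (-1 / p - 1) * k := by rw [flowSpeed]; field_simp; ring
    _ = k ^ (-1 / p) - k - k'' := by rw [h₁, h₂, h₃]; ring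

namespace IsRescaledFlow

variable {p : ℝ} {K : ℝ → ℝ → ℝ}

lemma contDiff_slice (hK : IsRescaledFlow p K) {τ : ℝ} (hτ : 0 < τ) :
    ContDiff ℝ 2 fun θ => K θ τ :=
  contDiffOn_univ.1 <| hK.contDiffOn.comp (f := fun θ => (θ, τ)) (by fun_prop)
    fun _ _ => ⟨mem_univ _, hτ⟩

lemma continuousOn_rpow (hK : IsRescaledFlow p K) (r : ℝ) :
    ContinuousOn (Function.uncurry fun θ τ => K θ τ ^ r) (univ ×ˢ Ioi 0) :=
  hK.contDiffOn.continuousOn.rpow_const fun q hq => Or.inl (hK.pos q.1 q.2 hq.2).ne'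

lemma hasDerivAt_rpow (hK : IsRescaledFlow p K) (hp : p ≠ 0) (θ : ℝ) {τ : ℝ} (hτ : 0 < τ) :
    HasDerivAt (fun s => K θ s ^ (-1 / p))
      (K θ τ ^ (-1 / p) - K θ τ - spaceDeriv (spaceDeriv K) θ τ) τ := by
  have hKτ := hK.pos θ τ hτ
  refine ((hasDerivAt_timeDeriv (hK.contDiffOn.differentiableOn two_ne_zero) isOpen_Ioi θ
    hτ).rpow_const (Or.inl hKτ.ne')).congr_deriv ?_
  rw [← rpow_mul_flowSpeed hp hKτ, hK.timeDeriv_eq θ τ hτ]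
  ring

lemma fourierCoeffOn_spaceDeriv_spaceDeriv (hK : IsRescaledFlow p K) {τ : ℝ} (hτ : 0 < τ) (n : ℤ) :
    fourierCoeffOn two_pi_pos (fun θ => ((spaceDeriv (spaceDeriv K) θ τ : ℝ) : ℂ)) n
      = -(n : ℂ) ^ 2 * fourierCoeffOn two_pi_pos (fun θ => ((K θ τ : ℝ) : ℂ)) n := by
  have hk := hK.contDiff_slice hτ
  have hk' : ContDiff ℝ 1 (deriv fun θ => K θ τ) := hk.deriv'
  have h := fourierCoeffOn_deriv_deriv_of_periodic two_pi_pos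
    (fun x _ => (hk.differentiable two_ne_zero x).hasDerivAt.ofReal_comp)
    (fun x _ => (hk'.differentiable one_ne_zero x).hasDerivAt.ofReal_comp)
    ((Complex.continuous_ofReal.comp hk'.continuous_deriv_one).intervalIntegrable _ _)
    (by simpa using hK.periodic τ hτ 0) (by simpa using periodic_deriv (hK.periodic τ hτ) 0) n
  simpa [pi_ne_zero, spaceDeriv] using! h

lemma hasDerivAt_fourierCoeffOn_rpow (hK : IsRescaledFlow p K) (hp : p ≠ 0) {n : ℤ}
    (hn : n ^ 2 = 1) {τ : ℝ} (hτ : 0 < τ) :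
    HasDerivAt
      (fun s => fourierCoeffOn two_pi_pos (fun θ => ((K θ s ^ (-1 / p) : ℝ) : ℂ)) n)
      (fourierCoeffOn two_pi_pos (fun θ => ((K θ τ ^ (-1 / p) : ℝ) : ℂ)) n) τ := by
  have hK_cont := hK.contDiffOn.continuousOn
  have hKxx_cont := (contDiffOn_spaceDeriv (m := 0) (contDiffOn_spaceDeriv (m := 1) hK.contDiffOn
    isOpen_Ioi.uniqueDiffOn le_rfl) isOpen_Ioi.uniqueDiffOn le_rfl).continuousOn
  have hrpow_cont := hK.continuousOn_rpow (-1 / p)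
  have hderiv := hasDerivAt_fourierCoeffOn two_pi_pos
    (f := fun θ s => ((K θ s ^ (-1 / p) : ℝ) : ℂ))
    (f' := fun θ s => (K θ s ^ (-1 / p) : ℝ) - (K θ s : ℂ) - (spaceDeriv (spaceDeriv K) θ s : ℝ))
    (Complex.continuous_ofReal.comp_continuousOn hrpow_cont)
    (((Complex.continuous_ofReal.comp_continuousOn hrpow_cont).sub
      (Complex.continuous_ofReal.comp_continuousOn hK_cont)).sub
      (Complex.continuous_ofReal.comp_continuousOn hKxx_cont))
    (fun θ s hs => by simpa using (hK.hasDerivAt_rpow hp θ hs).ofReal_comp) (Ioi_mem_nhds hτ) n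
  have slice_int : ∀ {h : ℝ → ℝ → ℝ}, ContinuousOn h.uncurry (univ ×ˢ Ioi 0) →
      IntervalIntegrable (fun θ => (h θ τ : ℂ)) MeasureTheory.volume 0 (2 * π) := fun hh =>
    (Complex.continuous_ofReal.comp (continuous_space_slice hh hτ)).intervalIntegrable _ _
  have hn' : (n : ℂ) ^ 2 = 1 := by exact_mod_cast hn
  refine hderiv.congr_deriv ?_
  rw [fourierCoeffOn_sub two_pi_pos ((slice_int hrpow_cont).sub (slice_int hK_cont))
      (slice_int hKxx_cont),
    fourierCoeffOn_sub two_pi_pos (slice_int hrpow_cont) (slice_int hK_cont),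
    hK.fourierCoeffOn_spaceDeriv_spaceDeriv hτ, hn']
  ring

lemma fourierCoeffOn_rpow_eq_zero (hK : IsRescaledFlow p K) (hp : p ≠ 0)
    (hconv : TendstoUniformly (fun τ θ => K θ τ) (fun _ => 1) atTop) {n : ℤ} (hn : n ^ 2 = 1)
    {τ : ℝ} (hτ : 0 < τ) :
    fourierCoeffOn two_pi_pos (fun θ => ((K θ τ ^ (-1 / p) : ℝ) : ℂ)) n = 0 := by
  refine eq_zero_of_hasDerivAt_smul_of_isBigO_one one_pos (t₀ := 0)
    (fun s hs => (hK.hasDerivAt_fourierCoeffOn_rpow hp hn hs).congr_deriv (one_smul ℝ _).symm)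
    (Asymptotics.IsBigO.of_bound 2 ?_) hτ
  filter_upwards [Metric.tendstoUniformly_iff.1 (tendstoUniformly_rpow_one hconv (-1 / p)) 1
    one_pos] with s hs
  rw [norm_one, mul_one]
  refine norm_fourierCoeffOn_le two_pi_pos (fun θ _ => ?_) n
  rw [Complex.norm_real, norm_eq_abs]
  have := hs θ
  rw [dist_comm, dist_eq] at this
  linarith [abs_sub_abs_le_abs_sub (K θ s ^ (-1 / p)) 1, abs_one (α := ℝ)]

lemma eventually_mul_integral_sq_spaceDeriv_le (hK : IsRescaledFlow p K) (hp : 0 < p)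
    (hconv : TendstoUniformly (fun τ θ => K θ τ) (fun _ => 1) atTop) {β : ℝ}
    (hβ : β < 3 * p - 1) :
    ∀ᶠ τ in atTop, β * ∫ θ in 0..2 * π, spaceDeriv K θ τ ^ 2
      ≤ ∫ θ in 0..2 * π, spaceDeriv (spaceDeriv K) θ τ * timeDeriv K θ τ := by
  have hrate : Tendsto (dissipationRate p) (nhds 0) (nhds (3 * p - 1)) := by
    have : Continuous (dissipationRate p) := by unfold dissipationRate; fun_prop
    convert this.tendsto 0 using 2
    simp only [dissipationRate]
    ring
  obtain ⟨ε, ⟨hε_rate, hε₁⟩, hε₀⟩ := (((hrate.eventually_const_lt hβ).and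
    (eventually_le_nhds one_pos)).filter_mono nhdsWithin_le_nhds |>.and
      (self_mem_nhdsWithin (s := Ioi (0 : ℝ)))).exists
  have hnear := fun r => Metric.tendstoUniformly_iff.1 (tendstoUniformly_rpow_one hconv r) ε hε₀
  filter_upwards [eventually_gt_atTop 0, hnear (1 + 1 / p), hnear (-1 / p - 1)]
    with τ hτ hdiff hweight
  simp only [hK.timeDeriv_eq _ τ hτ]
  refine le_trans ?_ (dissipationRate_mul_integral_le hp hε₁ (hK.contDiff_slice hτ)
    (hK.periodic τ hτ) (hK.pos · τ hτ) (fun θ => ?_) (fun θ => ?_)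
    fun n hn => hK.fourierCoeffOn_rpow_eq_zero hp.ne' hconv hn hτ)
  · exact mul_le_mul_of_nonneg_right hε_rate.le
      (intervalIntegral.integral_nonneg two_pi_pos.le fun θ _ => sq_nonneg _)
  · rw [← dist_eq, dist_comm]
    exact (hdiff θ).le
  · rw [← dist_eq, dist_comm]
    exact (hweight θ).le

end IsRescaledFlow

theorem first_derivative_L2_decay_general {p : ℝ} (hp : 0 < p) {K : ℝ → ℝ → ℝ}
    (hK : IsRescaledFlow p K) (hinit : ContDiffOn ℝ 1 K.uncurry (univ ×ˢ Ici 0))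
    (hconv : TendstoUniformly (fun τ θ => K θ τ) (fun _ => 1) atTop) {β : ℝ}
    (hβ : β < 3 * p - 1) :
    ∃ C, 0 < C ∧ ∀ τ, 0 ≤ τ →
      (∫ θ in 0..2 * π, deriv (fun x => K x τ) θ ^ 2) ^ ((1 : ℝ) / 2) ≤ C * exp (-β * τ) := by
  obtain ⟨T, hT⟩ := eventually_atTop.1
    ((hK.eventually_mul_integral_sq_spaceDeriv_le hp hconv hβ).and (eventually_gt_atTop 0))
  have hT₀ : 0 < T := (hT T le_rfl).2
  have hKx := contDiffOn_spaceDeriv (m := 0) hinit (uniqueDiffOn_Ici 0) le_rfl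
  have hbdd : BddAbove ((fun τ => ∫ θ in 0..2 * π, spaceDeriv K θ τ ^ 2) '' Icc 0 T) :=
    bddAbove_integral_image (h := fun θ τ => spaceDeriv K θ τ ^ 2) isCompact_Icc
      ((hKx.continuousOn.fun_pow 2).mono (prod_mono_right Icc_subset_Ici_self)) _ _
  have hderiv : ∀ τ, T ≤ τ → HasDerivAt (fun s => ∫ θ in 0..2 * π, spaceDeriv K θ s ^ 2)
      (-2 * ∫ θ in 0..2 * π, spaceDeriv (spaceDeriv K) θ τ * timeDeriv K θ τ) τ := fun τ hτ => by
    simpa only [zero_add] using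
      hasDerivAt_integral_sq_spaceDeriv hK.contDiffOn isOpen_Ioi hK.periodic (hT τ hτ).2 0
  obtain ⟨C, hC, hdecay⟩ := exists_le_mul_exp_of_deriv_le (c := 2 * β) hT₀.le hbdd hderiv
    fun τ hτ => by linarith [(hT τ hτ).1]
  refine ⟨√C, sqrt_pos.2 hC, fun τ hτ => ?_⟩
  rw [← sqrt_eq_rpow]
  refine (sqrt_le_sqrt (hdecay τ hτ)).trans_eq ?_
  rw [sqrt_mul hC.le, show -(2 * β) * τ = -β * τ + -β * τ by ring, exp_add,
    sqrt_mul_self (exp_pos _).le]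

/-- Exponential decay of the `L²` norm of the first angular derivative of
the normalized curvature. -/
theorem first_derivative_L2_decay
    (p : ℝ) (hp : 1 ≤ p) (K : ℝ → ℝ → ℝ)
    (hsmooth : ContDiffOn ℝ (⊤ : ℕ∞) (fun q : ℝ × ℝ => K q.1 q.2) (univ ×ˢ Ici 0))
    (hper : ∀ τ : ℝ, Function.Periodic (fun θ => K θ τ) (2 * π))
    (hpos : ∀ θ τ : ℝ, 0 ≤ τ → 0 < K θ τ)
    (hpde : ∀ θ : ℝ, ∀ τ ∈ Ioi (0:ℝ),
      deriv (fun s => K θ s) τ =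
        p * K θ τ ^ (1 + 1 / p) * deriv (deriv (fun x => K x τ)) θ
          + p * K θ τ ^ (2 + 1 / p) - p * K θ τ)
    (hconv : TendstoUniformly (fun τ θ => K θ τ) (fun _ => 1) atTop) :
    ∀ α : ℝ, 0 < α → α < 1 → ∃ C : ℝ, 0 < C ∧ ∀ τ : ℝ, 0 ≤ τ →
      (∫ θ in (0:ℝ)..(2 * π), (deriv (fun x => K x τ) θ) ^ 2) ^ ((1:ℝ) / 2) ≤
        C * Real.exp (-2 * α * p * τ) := by
  intro α _ hα₁
  have hK : IsRescaledFlow p K :=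
    ⟨(hsmooth.mono (prod_mono_right Ioi_subset_Ici_self)).of_le ENat.LEInfty.out,
      fun τ _ => hper τ, fun θ τ hτ => hpos θ τ hτ.le, hpde⟩
  have hα : 2 * α * p < 3 * p - 1 := by nlinarith
  simpa only [neg_mul] using first_derivative_L2_decay_general (one_pos.trans_le hp) hK
    (hsmooth.of_le ENat.LEInfty.out) hconv hα
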